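/- Let m = 4, v = (1, 9, 10, 15), q = (1/4, 1/4, 1/4, 1/4), and n = 2. Then no multiplier λ satisfying Property 3 minimizes g_B over all multipliers; equivalently, every multiplier minimizing g_B has some indices k, i with λ k i > 0 together with some j < i such that q j · φ(j,λ) > 0. -/

import Mathlib

/-!
Every multiplier gives index `1` virtual value at least `2`, so a multiplier escaping the violation
at `k = 3`, `i = 2`, `j = 1` must have `lam 3 2 = 0`. Then `phi` is `10` and `15` at indices `2` and
`3`, and the efficient auction that excludes the lowest type shows `161/32 ≤ gB`. Splitting row `3`
between columns `1` and `2` so that the virtual values there are both `70/11` makes virtual values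
monotone. For monotone virtual values, summation by parts against Border's constraints shows that
no Border-feasible allocation beats the efficient one with negative virtual values excluded, and
here this bounds `gB` by `1715/352 < 161/32`.
-/

open Finset

/-- A multiplier matrix: nonnegative, lower-triangular (`lam k j = 0` whenever `j > k`),
with each row `k` summing to `1` over `j ≤ k`. -/
def IsMultiplier {m : ℕ} (lam : Fin m → Fin m → ℝ) : Prop :=
  (∀ k j, 0 ≤ lam k j) ∧ (∀ k j : Fin m, k < j → lam k j = 0) ∧
  (∀ k, ∑ j ∈ Finset.Iic k, lam k j = 1)

/-- The virtual value `φ(i, λ) = v i − (1 / q i) · ∑_{k ≥ i} q k (v k − v i) λ k i`. -/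
noncomputable def phi {m : ℕ} (v q : Fin m → ℝ) (lam : Fin m → Fin m → ℝ) (i : Fin m) : ℝ :=
  v i - (1 / q i) * ∑ k ∈ Finset.Ici i, q k * (v k - v i) * lam k i

/-- Border-feasible allocation vector for `n` buyers: monotone, `[0,1]`-valued, satisfying
Border's constraints `n · ∑_{ℓ ≥ j} q ℓ · x ℓ ≤ 1 − (∑_{ℓ < j} q ℓ)^n` for all `j`. -/
def BorderFeasible (n : ℕ) {m : ℕ} (q : Fin m → ℝ) (x : Fin m → ℝ) : Prop :=
  Monotone x ∧ (∀ i, 0 ≤ x i ∧ x i ≤ 1) ∧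
  ∀ j : Fin m, (n : ℝ) * ∑ l ∈ Finset.Ici j, q l * x l ≤ 1 - (∑ l ∈ Finset.Iio j, q l) ^ n

/-- `g_B(λ)`: the supremum over Border-feasible allocation vectors `x` of
`∑ i, q i · φ(i, λ) · x i`. -/
noncomputable def gB (n : ℕ) {m : ℕ} (v q : Fin m → ℝ) (lam : Fin m → Fin m → ℝ) : ℝ :=
  sSup {s : ℝ | ∃ x : Fin m → ℝ, BorderFeasible n q x ∧ s = ∑ i, q i * phi v q lam i * x i}

section FinSums

theorem sum_Ici_Iic_sub_Iio {M : Type*} [AddCommGroup M] {m : ℕ} (g : Finset (Fin m) → M)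
    (j : Fin m) : ∑ l ∈ Ici j, (g (Iic l) - g (Iio l)) = g univ - g (Iio j) := by
  let below (k : ℕ) : Finset (Fin m) := {i | (i : ℕ) < k}
  have hIic (l : Fin m) : Iic l = below (l + 1) := by
    ext; simp [below]
  have hIio (l : Fin m) : Iio l = below l := by
    ext; simp [below]
  have huniv : univ = below m := by
    ext; simp [below]
  calc ∑ l ∈ Ici j, (g (Iic l) - g (Iio l))
      = ∑ l ∈ Ici j, (g (below (Fin.valEmbedding l + 1)) - g (below (Fin.valEmbedding l))) := by
        simp only [hIic, hIio, Fin.valEmbedding_apply]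
    _ = ∑ k ∈ Ico (j : ℕ) m, (g (below (k + 1)) - g (below k)) := by
        rw [← Fin.map_valEmbedding_Ici, sum_map]
    _ = g univ - g (Iio j) := by
        rw [sum_Ico_sub (fun k => g (below k)) j.is_le', huniv, hIio]

theorem sum_mul_nonneg_of_forall_sum_Ici_nonneg {R : Type*} [CommRing R] [PartialOrder R]
    [IsOrderedRing R] {m : ℕ} {w d : Fin m → R} (hw : Monotone w) (hw₀ : ∀ i, 0 ≤ w i)
    (hd : ∀ j, 0 ≤ ∑ i ∈ Ici j, d i) : 0 ≤ ∑ i, w i * d i := by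
  induction m with
  | zero => simp
  | succ m ih =>
    have htotal : 0 ≤ ∑ i, d i := by
      rw [← Ici_bot]
      exact hd ⊥
    have htail : 0 ≤ ∑ i : Fin m, (w i.succ - w 0) * d i.succ := by
      refine ih (fun i j hij => ?_) (fun i => ?_) (fun j => ?_)
      · exact sub_le_sub_right (hw (Fin.succ_le_succ_iff.2 hij)) _
      · exact sub_nonneg.2 (hw (Fin.zero_le _))
      · rw [← Fin.sum_Ici_succ]
        exact hd j.succ
    calc 0 ≤ w 0 * ∑ i, d i + ∑ i : Fin m, (w i.succ - w 0) * d i.succ :=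
          add_nonneg (mul_nonneg (hw₀ 0) htotal) htail
      _ = ∑ i, w i * d i := by
          simp only [Fin.sum_univ_succ, sub_mul, sum_sub_distrib, mul_add, mul_sum]
          ring

end FinSums

section EfficientAlloc

/-- The interim allocation of the efficient auction: the probability that a buyer with the value of
index `i` beats `n - 1` others when the highest value wins and ties are broken uniformly. With
`F = ∑ l ≤ i, q l` and `G = ∑ l < i, q l` this is `(F ^ n - G ^ n) / (n * q i)`, encoded as a
geometric sum so that it does not divide by `q i`. -/
noncomputable def efficientAlloc (n : ℕ) {m : ℕ} (q : Fin m → ℝ) (i : Fin m) : ℝ :=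
  (∑ k ∈ range n, (∑ l ∈ Iic i, q l) ^ k * (∑ l ∈ Iio i, q l) ^ (n - 1 - k)) / n

variable {n m : ℕ} {q : Fin m → ℝ}

theorem nat_mul_mul_efficientAlloc (n : ℕ) (q : Fin m → ℝ) (i : Fin m) :
    n * (q i * efficientAlloc n q i) = (∑ l ∈ Iic i, q l) ^ n - (∑ l ∈ Iio i, q l) ^ n := by
  rcases eq_or_ne n 0 with rfl | hn
  · simp
  have hq : q i = ∑ l ∈ Iic i, q l - ∑ l ∈ Iio i, q l := by
    rw [← sum_Iio_add_eq_sum_Iic, add_sub_cancel_left]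
  rw [← (Commute.all _ _).mul_geom_sum₂, ← hq, efficientAlloc]
  field_simp

theorem nat_mul_sum_Ici_mul_efficientAlloc (n : ℕ) (q : Fin m → ℝ) (j : Fin m) :
    n * ∑ l ∈ Ici j, q l * efficientAlloc n q l = (∑ l, q l) ^ n - (∑ l ∈ Iio j, q l) ^ n := by
  simp only [mul_sum, nat_mul_mul_efficientAlloc]
  exact sum_Ici_Iic_sub_Iio (fun s => (∑ l ∈ s, q l) ^ n) j

theorem efficientAlloc_nonneg (hq : ∀ i, 0 ≤ q i) (i : Fin m) : 0 ≤ efficientAlloc n q i := by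
  have hsum (s : Finset (Fin m)) : 0 ≤ ∑ l ∈ s, q l := sum_nonneg fun l _ => hq l
  exact div_nonneg (sum_nonneg fun k _ =>
    mul_nonneg (pow_nonneg (hsum _) _) (pow_nonneg (hsum _) _)) n.cast_nonneg

theorem monotone_efficientAlloc (hq : ∀ i, 0 ≤ q i) : Monotone (efficientAlloc n q) := by
  intro i j hij
  have hnonneg (s : Finset (Fin m)) : 0 ≤ ∑ l ∈ s, q l := sum_nonneg fun l _ => hq l
  have hmono {s t : Finset (Fin m)} (hst : s ⊆ t) : ∑ l ∈ s, q l ≤ ∑ l ∈ t, q l :=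
    sum_le_sum_of_subset_of_nonneg hst fun l _ _ => hq l
  refine div_le_div_of_nonneg_right (sum_le_sum fun k _ => ?_) n.cast_nonneg
  exact mul_le_mul (pow_le_pow_left₀ (hnonneg _) (hmono (Iic_subset_Iic.2 hij)) _)
    (pow_le_pow_left₀ (hnonneg _) (hmono (Iio_subset_Iio hij)) _)
    (pow_nonneg (hnonneg _) _) (pow_nonneg (hnonneg _) _)

theorem efficientAlloc_le_one (hq : ∀ i, 0 ≤ q i) (hq₁ : ∑ i, q i ≤ 1) (i : Fin m) :
    efficientAlloc n q i ≤ 1 := by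
  have hpow (s : Finset (Fin m)) (k : ℕ) : (∑ l ∈ s, q l) ^ k ≤ 1 :=
    pow_le_one₀ (sum_nonneg fun l _ => hq l)
      ((sum_le_univ_sum_of_nonneg hq).trans hq₁)
  have hgeom : ∑ k ∈ range n, (∑ l ∈ Iic i, q l) ^ k * (∑ l ∈ Iio i, q l) ^ (n - 1 - k) ≤ n := by
    simpa using sum_le_card_nsmul (range n) _ 1 fun k _ =>
      mul_le_one₀ (hpow _ k) (pow_nonneg (sum_nonneg fun l _ => hq l) _) (hpow _ _)
  exact (div_le_div_of_nonneg_right hgeom n.cast_nonneg).trans (div_self_le_one _)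

theorem borderFeasible_efficientAlloc (hq : ∀ i, 0 ≤ q i) (hq₁ : ∑ i, q i = 1) :
    BorderFeasible n q (efficientAlloc n q) :=
  ⟨monotone_efficientAlloc hq,
    fun i => ⟨efficientAlloc_nonneg hq i, efficientAlloc_le_one hq hq₁.le i⟩,
    fun j => by rw [nat_mul_sum_Ici_mul_efficientAlloc, hq₁, one_pow]⟩

theorem efficientAlloc_two_const (c : ℝ) (i : Fin m) :
    efficientAlloc 2 (fun _ => c) i = (2 * i + 1) / 2 * c := by
  simp [efficientAlloc, sum_range_succ]
  ring

end EfficientAlloc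

section GB

variable {n m : ℕ} {v q x : Fin m → ℝ} {lam : Fin m → Fin m → ℝ}

theorem BorderFeasible.indicator (hx : BorderFeasible n q x) (hq : ∀ i, 0 ≤ q i)
    {s : Set (Fin m)} (hs : IsUpperSet s) : BorderFeasible n q (s.indicator x) := by
  obtain ⟨hmono, hbound, hborder⟩ := hx
  have hle (i : Fin m) : s.indicator x i ≤ x i :=
    Set.indicator_le_self' (fun i _ => (hbound i).1) i
  refine ⟨fun i j hij => ?_, fun i => ?_, fun j => ?_⟩
  · by_cases hi : i ∈ s
    · rw [Set.indicator_of_mem hi, Set.indicator_of_mem (hs hij hi)]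
      exact hmono hij
    · rw [Set.indicator_of_notMem hi]
      exact Set.indicator_nonneg (fun k _ => (hbound k).1) j
  · exact ⟨Set.indicator_nonneg (fun k _ => (hbound k).1) i, (hle i).trans (hbound i).2⟩
  · refine le_trans ?_ (hborder j)
    gcongr with l
    · exact hq l
    · exact hle l

theorem BorderFeasible.sum_le_gB (hx : BorderFeasible n q x) :
    ∑ i, q i * phi v q lam i * x i ≤ gB n v q lam := by
  refine le_csSup ⟨∑ i, |q i * phi v q lam i|, ?_⟩ ⟨x, hx, rfl⟩
  rintro _ ⟨y, ⟨-, hy, -⟩, rfl⟩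
  refine sum_le_sum fun i _ => ?_
  calc q i * phi v q lam i * y i ≤ |q i * phi v q lam i| * y i :=
        mul_le_mul_of_nonneg_right (le_abs_self _) (hy i).1
    _ ≤ |q i * phi v q lam i| := mul_le_of_le_one_right (abs_nonneg _) (hy i).2

theorem sum_Ici_mul_efficientAlloc_le_gB (hq : ∀ i, 0 ≤ q i) (hq₁ : ∑ i, q i = 1) (r : Fin m) :
    ∑ i ∈ Ici r, q i * phi v q lam i * efficientAlloc n q i ≤ gB n v q lam := by
  refine le_of_eq_of_le ?_
    ((borderFeasible_efficientAlloc hq hq₁).indicator hq (isUpperSet_Ici r)).sum_le_gB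
  simp only [Set.indicator_apply, Set.mem_Ici, mul_ite, mul_zero, ← sum_filter]
  congr 1
  ext
  simp

theorem BorderFeasible.sum_mul_le_sum_mul_efficientAlloc (hn : n ≠ 0) (hq₁ : ∑ i, q i = 1)
    (hx : BorderFeasible n q x) {w : Fin m → ℝ} (hw : Monotone w) (hw₀ : ∀ i, 0 ≤ w i) :
    ∑ i, q i * w i * x i ≤ ∑ i, q i * w i * efficientAlloc n q i := by
  have htail (j : Fin m) : 0 ≤ ∑ i ∈ Ici j, q i * (efficientAlloc n q i - x i) := by
    have hborder := hx.2.2 j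
    rw [← one_pow n, ← hq₁, ← nat_mul_sum_Ici_mul_efficientAlloc] at hborder
    simp only [mul_sub, sum_sub_distrib]
    exact sub_nonneg.2 (le_of_mul_le_mul_left hborder (by positivity))
  have hdiff : 0 ≤ ∑ i, w i * (q i * (efficientAlloc n q i - x i)) :=
    sum_mul_nonneg_of_forall_sum_Ici_nonneg hw hw₀ htail
  rw [← sub_nonneg, ← sum_sub_distrib]
  exact hdiff.trans_eq (sum_congr rfl fun i _ => by ring)

theorem gB_le_of_monotone_phi (hn : n ≠ 0) (hq : ∀ i, 0 ≤ q i) (hq₁ : ∑ i, q i = 1)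
    (hphi : Monotone (phi v q lam)) :
    gB n v q lam ≤ ∑ i, q i * (phi v q lam i)⁺ * efficientAlloc n q i := by
  refine csSup_le ⟨_, _, borderFeasible_efficientAlloc hq hq₁, rfl⟩ ?_
  rintro _ ⟨x, hx, rfl⟩
  calc ∑ i, q i * phi v q lam i * x i ≤ ∑ i, q i * (phi v q lam i)⁺ * x i := by
        gcongr with i
        · exact (hx.2.1 i).1
        · exact hq i
        · exact le_posPart _
    _ ≤ ∑ i, q i * (phi v q lam i)⁺ * efficientAlloc n q i :=
        hx.sum_mul_le_sum_mul_efficientAlloc hn hq₁ (fun _ _ hij => posPart_mono (hphi hij))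
          fun _ => posPart_nonneg _

end GB

section Phi

variable {m : ℕ} {v q : Fin m → ℝ} {lam : Fin m → Fin m → ℝ}

theorem phi_eq_of_forall_lt_eq_zero {i : Fin m} (h : ∀ k, i < k → lam k i = 0) :
    phi v q lam i = v i := by
  have hzero : ∑ k ∈ Ici i, q k * (v k - v i) * lam k i = 0 := by
    refine sum_eq_zero fun k hk => ?_
    obtain rfl | hlt := (mem_Ici.1 hk).eq_or_lt
    · simp
    · rw [h k hlt, mul_zero]
  rw [phi, hzero, mul_zero, sub_zero]

theorem phi_eq_sub_sum (hlam : ∀ k j, k < j → lam k j = 0) (i : Fin m) :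
    phi v q lam i = v i - 1 / q i * ∑ k, q k * (v k - v i) * lam k i := by
  rw [phi, sum_subset (subset_univ (Ici i)) fun k _ hk => ?_]
  rw [hlam k i (not_le.1 (mem_Ici.not.1 hk)), mul_zero]

theorem isMultiplier_iff_sum_univ : IsMultiplier lam ↔
    (∀ k j, 0 ≤ lam k j) ∧ (∀ k j, k < j → lam k j = 0) ∧ ∀ k, ∑ j, lam k j = 1 := by
  refine and_congr_right fun _ => and_congr_right fun htri => forall_congr' fun k => ?_
  rw [sum_subset (subset_univ (Iic k)) fun j _ hj => htri k j (not_le.1 (mem_Iic.not.1 hj))]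

theorem IsMultiplier.le_one (hlam : IsMultiplier lam) (k j : Fin m) : lam k j ≤ 1 := by
  obtain ⟨hnonneg, -, hsum⟩ := isMultiplier_iff_sum_univ.1 hlam
  exact hsum k ▸ single_le_sum (fun j _ => hnonneg k j) (mem_univ j)

theorem IsMultiplier.sub_le_phi (hlam : IsMultiplier lam) (hv : Monotone v) (hq : ∀ i, 0 ≤ q i)
    (i : Fin m) : v i - 1 / q i * ∑ k ∈ Ici i, q k * (v k - v i) ≤ phi v q lam i := by
  refine sub_le_sub_left (mul_le_mul_of_nonneg_left (sum_le_sum fun k hk => ?_)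
    (one_div_nonneg.2 (hq i))) _
  exact mul_le_of_le_one_right
    (mul_nonneg (hq k) (sub_nonneg.2 (hv (mem_Ici.1 hk)))) (hlam.le_one k i)

end Phi

section Example

local notation "v₀" => (![1, 9, 10, 15] : Fin 4 → ℝ)
local notation "q₀" => (![1/4, 1/4, 1/4, 1/4] : Fin 4 → ℝ)

theorem sum_Ici_one_fin_four {M : Type*} [AddCommMonoid M] (f : Fin 4 → M) :
    ∑ i ∈ Ici 1, f i = f 1 + f 2 + f 3 := by
  rw [show Ici (1 : Fin 4) = {1, 2, 3} by decide, sum_insert (by decide), sum_pair (by decide),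
    add_assoc]

/-- The multiplier compared with those that have `lam 3 2 = 0`. The split `3/11 + 8/11` of the last
row solves `8 - 6 * t = 5 + 5 * t`, which equates the virtual values at indices `1` and `2`. -/
noncomputable def ironingMultiplier : Fin 4 → Fin 4 → ℝ :=
  ![![1, 0, 0, 0], ![1, 0, 0, 0], ![0, 1, 0, 0], ![0, 3/11, 8/11, 0]]

theorem isMultiplier_ironingMultiplier : IsMultiplier ironingMultiplier := by
  refine isMultiplier_iff_sum_univ.2 ⟨fun k j => ?_, fun k j => ?_, fun k => ?_⟩
  · fin_cases k <;> fin_cases j <;> norm_num [ironingMultiplier]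
  · fin_cases k <;> fin_cases j <;> simp [ironingMultiplier]
  · fin_cases k <;> norm_num [ironingMultiplier, Fin.sum_univ_succ]

theorem phi_ironingMultiplier : phi v₀ q₀ ironingMultiplier = ![-7, 70/11, 70/11, 15] := by
  ext i
  rw [phi_eq_sub_sum isMultiplier_ironingMultiplier.2.1]
  fin_cases i <;> norm_num [ironingMultiplier, Fin.sum_univ_succ]

theorem efficientAlloc_two_quarter : efficientAlloc 2 q₀ = ![1/8, 3/8, 5/8, 7/8] := by
  have hq : q₀ = fun _ => 1/4 := by ext i; fin_cases i <;> rfl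
  ext i
  rw [hq, efficientAlloc_two_const]
  fin_cases i <;> norm_num

theorem quarter_nonneg (i : Fin 4) : 0 ≤ q₀ i := by
  fin_cases i <;> norm_num

theorem sum_quarter : ∑ i, q₀ i = 1 := by
  norm_num [Fin.sum_univ_succ]

theorem gB_ironingMultiplier_le : gB 2 v₀ q₀ ironingMultiplier ≤ 1715/352 := by
  have hmono : Monotone (phi v₀ q₀ ironingMultiplier) := by
    norm_num [phi_ironingMultiplier, Fin.monotone_iff_le_succ, Fin.forall_fin_succ]
  refine (gB_le_of_monotone_phi two_ne_zero quarter_nonneg sum_quarter hmono).trans ?_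
  norm_num [phi_ironingMultiplier, efficientAlloc_two_quarter, Fin.sum_univ_succ, posPart_def]

variable {lam : Fin 4 → Fin 4 → ℝ}

theorem IsMultiplier.two_le_phi_one (hlam : IsMultiplier lam) : 2 ≤ phi v₀ q₀ lam 1 := by
  have hv : Monotone v₀ := by
    norm_num [Fin.monotone_iff_le_succ, Fin.forall_fin_succ]
  have hphi := hlam.sub_le_phi hv quarter_nonneg 1
  simp only [sum_Ici_one_fin_four, Matrix.cons_val] at hphi
  linarith

theorem IsMultiplier.le_gB_of_eq_zero (hlam : IsMultiplier lam) (h : lam 3 2 = 0) :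
    161/32 ≤ gB 2 v₀ q₀ lam := by
  have hphi₁ := hlam.two_le_phi_one
  have hphi₂ : phi v₀ q₀ lam 2 = 10 :=
    phi_eq_of_forall_lt_eq_zero fun k hk => by rwa [show k = 3 by lia]
  have hphi₃ : phi v₀ q₀ lam 3 = 15 := phi_eq_of_forall_lt_eq_zero fun k hk => by lia
  have hgB := sum_Ici_mul_efficientAlloc_le_gB (n := 2) (v := v₀) (lam := lam)
    quarter_nonneg sum_quarter 1
  simp only [sum_Ici_one_fin_four, efficientAlloc_two_quarter, hphi₂, hphi₃,
    Matrix.cons_val] at hgB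
  linarith

theorem IsMultiplier.gB_ironingMultiplier_lt_of_eq_zero (hlam : IsMultiplier lam)
    (h : lam 3 2 = 0) : gB 2 v₀ q₀ ironingMultiplier < gB 2 v₀ q₀ lam :=
  calc gB 2 v₀ q₀ ironingMultiplier ≤ 1715/352 := gB_ironingMultiplier_le
    _ < 161/32 := by norm_num
    _ ≤ gB 2 v₀ q₀ lam := hlam.le_gB_of_eq_zero h

end Example

/-- With `m = 4`, `v = (1, 9, 10, 15)`, `q = (1/4, 1/4, 1/4, 1/4)` and `n = 2` buyers,
every multiplier minimizing `g_B` violates Property 3: it has some `λ k i > 0` together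
with some `j < i` such that `q j · φ(j, λ) > 0`. -/
theorem optimal_gB_violates_property3 :
    ∀ lam : Fin 4 → Fin 4 → ℝ, IsMultiplier lam →
      (∀ lam' : Fin 4 → Fin 4 → ℝ, IsMultiplier lam' →
        gB 2 (![1, 9, 10, 15]) (![1/4, 1/4, 1/4, 1/4]) lam
          ≤ gB 2 (![1, 9, 10, 15]) (![1/4, 1/4, 1/4, 1/4]) lam') →
      ∃ k i : Fin 4, 0 < lam k i ∧
        ∃ j : Fin 4, j < i ∧
          0 < (![1/4, 1/4, 1/4, 1/4] : Fin 4 → ℝ) j *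
              phi (![1, 9, 10, 15]) (![1/4, 1/4, 1/4, 1/4]) lam j := by
  intro lam hlam hmin
  have hweight : lam 3 2 ≠ 0 := fun h =>
    (hlam.gB_ironingMultiplier_lt_of_eq_zero h).not_ge (hmin _ isMultiplier_ironingMultiplier)
  have hphi : 0 < phi (![1, 9, 10, 15]) (![1/4, 1/4, 1/4, 1/4]) lam 1 :=
    two_pos.trans_le hlam.two_le_phi_one
  exact ⟨3, 2, (hlam.1 3 2).lt_of_ne' hweight, 1, by decide, mul_pos (by norm_num) hphi⟩
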